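/- arXiv:1503.04658 — 6 statements merged into one kernel-verified Lean document; each statement's English description precedes it below -/
import Mathlib

section
/- There exist infinitely many pairs of positive integers (m, n) satisfying m(m+1) + m(m+1) = n(n+1). (The sequence of solutions begins m/n = 2/3, 14/20, 84/119, 492/696, ….) -/
/-! In terms of `x = 2n + 1` and `y = 2m + 1` the equation is the negative Pell equation
`x² - 2y² = -1`. Multiplication by the unit `3 + 2√2` preserves it, which on `(m, n)` is the map
`(m, n) ↦ (3m + 2n + 2, 4m + 3n + 3)`. Iterating from `(2, 3)` gives solutions with `m`
arbitrarily large. -/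

theorem exists_near_square_doubling_gt (k : ℕ) :
    ∃ m n : ℕ, k < m ∧ 0 < n ∧ m * (m + 1) + m * (m + 1) = n * (n + 1) := by
  induction k with
  | zero => exact ⟨2, 3, by norm_num⟩
  | succ k ih =>
    obtain ⟨m, n, hm, hn, h⟩ := ih
    exact ⟨3 * m + 2 * n + 2, 4 * m + 3 * n + 3, by omega, by omega, by linarith⟩

theorem infinitely_many_near_square_doublings :
    {p : ℕ × ℕ | 0 < p.1 ∧ 0 < p.2 ∧
      p.1 * (p.1 + 1) + p.1 * (p.1 + 1) = p.2 * (p.2 + 1)}.Infinite := by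
  refine Set.Infinite.of_image Prod.fst (Set.infinite_of_forall_exists_gt fun k => ?_)
  obtain ⟨m, n, hm, hn, h⟩ := exists_near_square_doubling_gt k
  exact ⟨m, ⟨(m, n), ⟨Nat.zero_lt_of_lt hm, hn, h⟩, rfl⟩, hm⟩
end

section
/- There exist infinitely many pairs of positive integers (m, n) satisfying m² + m² = n(n+1). (The sequence of solutions begins m/n = 1/1, 6/8, 35/49, 204/288, ….) -/
/-!
The equation `2 * m ^ 2 = n * (n + 1)` amounts to the Pell equation
`(2 * n + 1) ^ 2 - 2 * (2 * m) ^ 2 = 1`. Multiplication by the unit `3 + 2 * √2` acts on the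
solutions as `(m, n) ↦ (3 * m + 2 * n + 1, 4 * m + 3 * n + 1)`, which strictly increases `m`.
Starting from `(1, 1)`, it yields solutions with `m` arbitrarily large.
-/

theorem infinitely_many_two_squares_near_square :
    {p : ℕ × ℕ | 0 < p.1 ∧ 0 < p.2 ∧
      p.1 ^ 2 + p.1 ^ 2 = p.2 * (p.2 + 1)}.Infinite := by
  have unbounded : ∀ k : ℕ, ∃ m n : ℕ, k < m ∧ 0 < n ∧ m ^ 2 + m ^ 2 = n * (n + 1) := by
    intro k
    induction k with
    | zero => exact ⟨1, 1, by norm_num⟩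
    | succ k ih =>
      obtain ⟨m, n, hm, hn, h⟩ := ih
      exact ⟨3 * m + 2 * n + 1, 4 * m + 3 * n + 1, by omega, by omega, by linarith⟩
  apply Set.Infinite.of_image Prod.fst
  apply Set.infinite_of_forall_exists_gt
  intro k
  obtain ⟨m, n, hm, hn, h⟩ := unbounded k
  exact ⟨m, ⟨(m, n), ⟨Nat.zero_lt_of_lt hm, hn, h⟩, rfl⟩, hm⟩
end

section
/- There exist infinitely many pairs of positive integers (m, n) satisfying m(m+1) + (m+1)(m+2) = n(n+1). (The sequence of solutions begins m/n = 5/8, 34/49, 203/288, 1188/1681, ….) -/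
/-! With `x = m + 1` and `y = 2 * n + 1` the equation reads `y ^ 2 - 8 * x ^ 2 = 1`, a Pell equation.
Multiplication by its fundamental unit `3 + √8` sends `(m, n)` to `(3m + 2n + 3, 4m + 3n + 5)`;
starting from `(5, 8)`, this yields solutions with `m` arbitrarily large. -/

theorem infinitely_many_near_square_plus_next :
    {p : ℕ × ℕ | 0 < p.1 ∧ 0 < p.2 ∧
      p.1 * (p.1 + 1) + (p.1 + 1) * (p.1 + 2) = p.2 * (p.2 + 1)}.Infinite := by
  have key : ∀ a : ℕ, ∃ m n : ℕ, a < m ∧ 0 < n ∧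
      m * (m + 1) + (m + 1) * (m + 2) = n * (n + 1) := by
    intro a
    induction a with
    | zero => exact ⟨5, 8, by norm_num⟩
    | succ a ih =>
      obtain ⟨m, n, hm, hn, h⟩ := ih
      refine ⟨3 * m + 2 * n + 3, 4 * m + 3 * n + 5, by omega, by omega, ?_⟩
      linarith
  refine Set.Infinite.of_image Prod.fst (Set.infinite_of_forall_exists_gt fun a => ?_)
  obtain ⟨m, n, hm, hn, h⟩ := key a
  exact ⟨m, ⟨(m, n), ⟨by dsimp only; omega, hn, h⟩, rfl⟩, hm⟩
end

section
/- If positive integers m and n satisfy 2m(m+1) = n(n+1), then m < n < 2m + 1, and the integers a = n − m and b = 2m − n satisfy 2a² = b(b+1). -/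
theorem near_square_doubling_descent_to_squares (m n : ℕ) (hm : 0 < m) (hn : 0 < n)
    (h : 2 * (m * (m + 1)) = n * (n + 1)) :
    m < n ∧ n < 2 * m + 1 ∧
      2 * (n - m) ^ 2 = (2 * m - n) * (2 * m - n + 1) := by
  have h1 : m < n := by
    by_contra! hle
    nlinarith [Nat.mul_le_mul hle (Nat.succ_le_succ hle)]
  have h2 : n < 2 * m + 1 := by
    by_contra! hle
    nlinarith [Nat.mul_le_mul hle (Nat.succ_le_succ hle)]
  refine ⟨h1, h2, ?_⟩
  -- The bounds make both natural-number subtractions exact; with `a = n - m` and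
  -- `b = 2 * m - n` one has `m = a + b`, `n = 2 * a + b`, which turns `h` into the goal.
  obtain ⟨a, ha⟩ : ∃ a, a = n - m := ⟨_, rfl⟩
  obtain ⟨b, hb⟩ : ∃ b, b = 2 * m - n := ⟨_, rfl⟩
  rw [← ha, ← hb]
  obtain rfl : m = a + b := by omega
  obtain rfl : n = 2 * a + b := by omega
  nlinarith [h]
end

section
/- If integers m ≥ 2 and n ≥ 1 satisfy 2m² = n(n+1), then m < n < 2m, and the integers a = n − m and b = 2m − n − 1 satisfy 2a(a+1) = b(b+1). -/
theorem two_squares_near_square_descent (m n : ℕ) (hm : 2 ≤ m) (hn : 1 ≤ n)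
    (h : 2 * m ^ 2 = n * (n + 1)) :
    m < n ∧ n < 2 * m ∧
      2 * ((n - m) * (n - m + 1)) = (2 * m - n - 1) * (2 * m - n - 1 + 1) := by
  have h1 : m < n := by
    by_contra! hle
    nlinarith [Nat.mul_le_mul hle (Nat.succ_le_succ hle)]
  have h2 : n < 2 * m := by
    by_contra! hle
    nlinarith [Nat.mul_le_mul hle (Nat.succ_le_succ hle)]
  refine ⟨h1, h2, ?_⟩
  -- The two inequalities make the truncated subtractions exact; over `ℤ` the two sides
  -- then differ by a multiple of `h`.
  obtain ⟨a, ha⟩ : ∃ a, n - m = a := ⟨_, rfl⟩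
  obtain ⟨b, hb⟩ : ∃ b, 2 * m - n - 1 = b := ⟨_, rfl⟩
  have ha' : (a : ℤ) = n - m := by omega
  have hb' : (b : ℤ) = 2 * m - n - 1 := by omega
  rw [ha, hb]
  zify at h ⊢
  rw [ha', hb']
  linear_combination -h
end

section
/- If positive integers m and n satisfy 2m(m+1) = n(n+1) with m ≥ 3, then 2n < 3m and 4m + 1 < 3n, and the positive integers m' = 3m − 2n and n' = 3n − 4m − 1 satisfy 2m'(m'+1) = n'(n'+1) with m' < m. -/
/-!
With `M = 2m + 1` and `N = 2n + 1` the equation reads `N² - 2M² = -1`, and the descent is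
`(M, N) ↦ (3M - 2N, 3N - 4M)`, i.e. multiplication of `N + M√2` by `3 - 2√2`, which has norm `1`.
The positivity of the new pair follows by comparing the two sides of the equation at the
boundary values `n = 3m/2` and `n = (4m + 1)/3`; both comparisons reverse exactly when `m > 2`.
-/

theorem near_square_doubling_descent (m n : ℕ) (hm : 3 ≤ m) (hn : 0 < n)
    (h : 2 * (m * (m + 1)) = n * (n + 1)) :
    2 * n < 3 * m ∧ 4 * m + 1 < 3 * n ∧
      2 * ((3 * m - 2 * n) * (3 * m - 2 * n + 1))
        = (3 * n - 4 * m - 1) * (3 * n - 4 * m - 1 + 1) ∧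
      3 * m - 2 * n < m := by
  have h1 : 2 * n < 3 * m := by
    by_contra! hc
    -- `3m ≤ 2n` gives `9m² + 6m ≤ 4n(n + 1) = 8m² + 8m`, so `m ≤ 2`.
    have := Nat.mul_le_mul hc (Nat.add_le_add_right hc 2)
    nlinarith
  have h2 : 4 * m + 1 < 3 * n := by
    by_contra! hc
    -- `3n ≤ 4m + 1` gives `18m(m + 1) = 9n(n + 1) ≤ (4m + 1)(4m + 4)`, so `m ≤ 2`.
    have := Nat.mul_le_mul hc (Nat.add_le_add_right hc 3)
    nlinarith
  refine ⟨h1, h2, ?_, by omega⟩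
  -- Naming the two differences removes the truncated subtractions.
  obtain ⟨a, ha⟩ : ∃ a, a = 3 * m - 2 * n := ⟨_, rfl⟩
  obtain ⟨b, hb⟩ : ∃ b, b = 3 * n - 4 * m - 1 := ⟨_, rfl⟩
  rw [← ha, ← hb]
  have ha' : (a : ℤ) = 3 * m - 2 * n := by omega
  have hb' : (b : ℤ) = 3 * n - 4 * m - 1 := by omega
  zify at h ⊢
  rw [ha', hb']
  linear_combination h
end
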